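/- Let X be a pseudo-metric space that coarsely embeds in ℓ¹(A) for some set A. Then for every set S and every choice of basepoints x_s ∈ X (s ∈ S), the wedge ⋁_{s∈S}(X_s, x_s) of the pointed copies (X_s, x_s) of X coarsely embeds in ℓ¹(B) for some set B. -/

import Mathlib

/-- A coarse embedding with respect to given distance functions: there are non-decreasing
`ρ₋, ρ₊` with `ρ₋ → ∞` such that `ρ₋(d(x,y)) ≤ d(f x, f y) ≤ ρ₊(d(x,y))`. -/
def CoarseEmbedD {Y Z : Type} (dY : Y → Y → ℝ) (dZ : Z → Z → ℝ) (f : Y → Z) : Prop :=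
  ∃ ρm ρp : ℝ → ℝ, Monotone ρm ∧ Monotone ρp ∧
    Filter.Tendsto ρm Filter.atTop Filter.atTop ∧
    ∀ x y : Y, ρm (dY x y) ≤ dZ (f x) (f y) ∧ dZ (f x) (f y) ≤ ρp (dY x y)

open Classical in
/-- The wedge distance on `S` copies of `X`, the `s`-th copy pointed at `p s`. -/
noncomputable def wedgeCopiesDist {S X : Type} [PseudoMetricSpace X] (p : S → X)
    (u v : S × X) : ℝ :=
  if u.1 = v.1 then dist u.2 v.2 else dist u.2 (p u.1) + dist (p v.1) v.2

/-
Translate each embedding so that the basepoint goes to `0`, and let the copies use disjoint blocks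
of coordinates. In `ℓ¹` the distance between vectors supported on disjoint blocks is the sum of
their norms, so the combined map pulls the `ℓ¹` distance back to the wedge of the pulled-back
distances. Control functions `ρ₋`, `ρ₊` common to all copies then pass to the wedge as `ρ₋(t / 2)`
and `2 ρ₊(t)`: of two nonnegative numbers the larger is at least half the sum, and neither is
larger than the sum.
-/

/-- A family of maps `f s` that are coarse embeddings with the same control functions `ρ₋, ρ₊` for
all `s`; this uniformity is what lets the maps be assembled into a coarse embedding of a wedge. -/
def EquiCoarseEmbedD {S : Type*} {Y Z : S → Type*} (dY : ∀ s, Y s → Y s → ℝ)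
    (dZ : ∀ s, Z s → Z s → ℝ) (f : ∀ s, Y s → Z s) : Prop :=
  ∃ ρm ρp : ℝ → ℝ, Monotone ρm ∧ Monotone ρp ∧
    Filter.Tendsto ρm Filter.atTop Filter.atTop ∧
    ∀ s x y, ρm (dY s x y) ≤ dZ s (f s x) (f s y) ∧ dZ s (f s x) (f s y) ≤ ρp (dY s x y)

namespace CoarseEmbedD

variable {Y Z : Type} {dY : Y → Y → ℝ} {dZ : Z → Z → ℝ} {f : Y → Z}

theorem of_dist_eq (hf : CoarseEmbedD dY dZ f) {V W : Type} {dV : V → V → ℝ} {dW : W → W → ℝ}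
    {e : V → Y} {g : V → W} (hV : ∀ x y, dV x y = dY (e x) (e y))
    (hW : ∀ x y, dW (g x) (g y) = dZ (f (e x)) (f (e y))) : CoarseEmbedD dV dW g := by
  obtain ⟨ρm, ρp, hρm, hρp, hlim, hbd⟩ := hf
  refine ⟨ρm, ρp, hρm, hρp, hlim, fun x y => ?_⟩
  rw [hV, hW]
  exact hbd (e x) (e y)

theorem equiCoarseEmbedD (hf : CoarseEmbedD dY dZ f) (S : Type*) :
    EquiCoarseEmbedD (fun _ : S => dY) (fun _ => dZ) (fun _ => f) := by
  obtain ⟨ρm, ρp, hρm, hρp, hlim, hbd⟩ := hf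
  exact ⟨ρm, ρp, hρm, hρp, hlim, fun _ => hbd⟩

end CoarseEmbedD

section Wedge

variable {S : Type*} {X : S → Type*}

open Classical in
/-- The wedge of the distances `d s` on the spaces `X s` pointed at `p s`, as a distance on their
disjoint union. -/
noncomputable def wedgeDist (d : ∀ s, X s → X s → ℝ) (p : ∀ s, X s) :
    (Σ s, X s) → (Σ s, X s) → ℝ
  | ⟨s, x⟩, ⟨t, y⟩ => if h : s = t then d t (h ▸ x) y else d s x (p s) + d t (p t) y

theorem wedgeDist_same (d : ∀ s, X s → X s → ℝ) (p : ∀ s, X s) (s : S) (x y : X s) :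
    wedgeDist d p ⟨s, x⟩ ⟨s, y⟩ = d s x y :=
  dif_pos rfl

theorem wedgeDist_of_ne (d : ∀ s, X s → X s → ℝ) (p : ∀ s, X s) {s t : S} (hst : s ≠ t)
    (x : X s) (y : X t) :
    wedgeDist d p ⟨s, x⟩ ⟨t, y⟩ = d s x (p s) + d t (p t) y :=
  dif_neg hst

end Wedge

theorem wedgeCopiesDist_eq_wedgeDist {S X : Type} [PseudoMetricSpace X] (p : S → X)
    (u v : S × X) :
    wedgeCopiesDist p u v = wedgeDist (fun _ => dist) p ⟨u.1, u.2⟩ ⟨v.1, v.2⟩ := by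
  obtain ⟨s, x⟩ := u
  obtain ⟨t, y⟩ := v
  obtain rfl | hst := eq_or_ne s t
  · rw [wedgeDist_same, wedgeCopiesDist, if_pos rfl]
  · rw [wedgeDist_of_ne _ _ hst, wedgeCopiesDist, if_neg hst]

theorem EquiCoarseEmbedD.wedge {S : Type} {Y Z : S → Type} {dY : ∀ s, Y s → Y s → ℝ}
    {dZ : ∀ s, Z s → Z s → ℝ} {f : ∀ s, Y s → Z s} (hf : EquiCoarseEmbedD dY dZ f)
    (hdY : ∀ s x y, 0 ≤ dY s x y) (hdZ : ∀ s u v, 0 ≤ dZ s u v) (p : ∀ s, Y s) :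
    CoarseEmbedD (wedgeDist dY p) (wedgeDist dZ fun s => f s (p s)) (Sigma.map id f) := by
  obtain ⟨ρm, ρp, hρm, hρp, hlim, hbd⟩ := hf
  have lower (s x y) : ρm (dY s x y) ≤ dZ s (f s x) (f s y) := (hbd s x y).1
  have upper (s x y) : dZ s (f s x) (f s y) ≤ ρp (dY s x y) := (hbd s x y).2
  refine ⟨fun r => ρm (r / 2), fun r => 2 * ρp r, fun a b hab => hρm (by linarith),
    hρp.const_mul zero_le_two, hlim.comp (Filter.tendsto_id.atTop_div_const two_pos), ?_⟩
  rintro ⟨s, x⟩ ⟨t, y⟩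
  obtain rfl | hst := eq_or_ne s t
  · simp only [Sigma.map, id_eq, wedgeDist_same]
    constructor
    · exact (hρm (half_le_self (hdY s x y))).trans (lower s x y)
    · linarith [hdZ s (f s x) (f s y), upper s x y]
  · simp only [Sigma.map, id_eq, wedgeDist_of_ne _ _ hst]
    have hx := hdY s x (p s)
    have hy := hdY t (p t) y
    have hfx := hdZ s (f s x) (f s (p s))
    have hfy := hdZ t (f t (p t)) (f t y)
    constructor
    · obtain h | h := le_total (dY s x (p s)) (dY t (p t) y)
      · calc ρm ((dY s x (p s) + dY t (p t) y) / 2) ≤ ρm (dY t (p t) y) := hρm (by linarith)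
          _ ≤ dZ t (f t (p t)) (f t y) := lower t (p t) y
          _ ≤ _ := le_add_of_nonneg_left hfx
      · calc ρm ((dY s x (p s) + dY t (p t) y) / 2) ≤ ρm (dY s x (p s)) := hρm (by linarith)
          _ ≤ dZ s (f s x) (f s (p s)) := lower s x (p s)
          _ ≤ _ := le_add_of_nonneg_right hfy
    · calc dZ s (f s x) (f s (p s)) + dZ t (f t (p t)) (f t y)
          ≤ ρp (dY s x (p s)) + ρp (dY t (p t) y) := add_le_add (upper s x (p s)) (upper t (p t) y)
        _ ≤ ρp (dY s x (p s) + dY t (p t) y) + ρp (dY s x (p s) + dY t (p t) y) :=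
          add_le_add (hρp (le_add_of_nonneg_right hy)) (hρp (le_add_of_nonneg_left hx))
        _ = 2 * ρp (dY s x (p s) + dY t (p t) y) := (two_mul _).symm

section L1

variable {A B C E : Type*} [SeminormedAddCommGroup E]

/-- The `ℓ¹` distance between `E`-valued functions on `A`; it is the junk value `0` when the
difference is not norm-summable. -/
noncomputable def l1Dist (u v : A → E) : ℝ :=
  ∑' a, ‖u a - v a‖

theorem l1Dist_nonneg (u v : A → E) : 0 ≤ l1Dist u v :=
  tsum_nonneg fun _ => norm_nonneg _

theorem summable_norm_sub {u v : A → E} (hu : Summable fun a => ‖u a‖)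
    (hv : Summable fun a => ‖v a‖) : Summable fun a => ‖(u - v) a‖ :=
  .of_nonneg_of_le (fun _ => norm_nonneg _) (fun _ => norm_sub_le _ _) (hu.add hv)

theorem norm_extend_zero (i : A → C) (u : A → E) (c : C) :
    ‖Function.extend i u 0 c‖ = Function.extend i (fun a => ‖u a‖) 0 c := by
  rw [Function.apply_extend norm]
  congr 1
  exact funext fun _ => norm_zero

theorem l1Dist_extend_zero {i : A → C} (hi : Function.Injective i) (u v : A → E) :
    l1Dist (Function.extend i u 0) (Function.extend i v 0) = l1Dist u v := by
  have hsub (c : C) : Function.extend i u 0 c - Function.extend i v 0 c =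
      Function.extend i (u - v) 0 c := by
    rw [← Pi.sub_apply, ← Function.extend_sub, sub_zero]
  simp only [l1Dist, hsub, norm_extend_zero, tsum_extend_zero hi, Pi.sub_apply]

theorem norm_extend_zero_sub_extend_zero {i : A → C} {j : B → C}
    (hij : Disjoint (Set.range i) (Set.range j)) (u : A → E) (v : B → E) (c : C) :
    ‖Function.extend i u 0 c - Function.extend j v 0 c‖ =
      ‖Function.extend i u 0 c‖ + ‖Function.extend j v 0 c‖ := by
  by_cases hc : c ∈ Set.range i
  · have hv : Function.extend j v 0 c = 0 :=
      Function.extend_apply' v (0 : C → E) c (Set.disjoint_left.mp hij hc)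
    rw [hv, sub_zero, norm_zero, add_zero]
  · have hu : Function.extend i u 0 c = 0 := Function.extend_apply' u (0 : C → E) c hc
    rw [hu, zero_sub, norm_neg, norm_zero, zero_add]

theorem l1Dist_extend_zero_of_disjoint {i : A → C} {j : B → C} (hi : Function.Injective i)
    (hj : Function.Injective j) (hij : Disjoint (Set.range i) (Set.range j)) {u : A → E}
    {v : B → E} (hu : Summable fun a => ‖u a‖) (hv : Summable fun b => ‖v b‖) :
    l1Dist (Function.extend i u 0) (Function.extend j v 0) = ∑' a, ‖u a‖ + ∑' b, ‖v b‖ := by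
  simp only [l1Dist, norm_extend_zero_sub_extend_zero hij, norm_extend_zero]
  exact (((hasSum_extend_zero hi).mpr hu.hasSum).add
    ((hasSum_extend_zero hj).mpr hv.hasSum)).tsum_eq

end L1

section WedgeToL1

variable {S E : Type*} {A : S → Type*} [SeminormedAddCommGroup E]

/-- The canonical map from the wedge of the spaces `ℓ¹(A s)` pointed at `z s` to `ℓ¹` of the
disjoint union of the `A s`: the copy `s` is translated by `-z s` and placed in the block of
coordinates over `s`. It is defined on all functions, summable or not. -/
noncomputable def wedgeToL1 (z : ∀ s, A s → E) (w : Σ s, A s → E) : (Σ s, A s) → E :=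
  Function.extend (Sigma.mk w.1) (w.2 - z w.1) 0

theorem summable_norm_wedgeToL1 {z : ∀ s, A s → E} (hz : ∀ s, Summable fun a => ‖z s a‖)
    {w : Σ s, A s → E} (hw : Summable fun a => ‖w.2 a‖) :
    Summable fun b => ‖wedgeToL1 z w b‖ := by
  simp only [wedgeToL1, norm_extend_zero]
  exact (summable_extend_zero sigma_mk_injective).mpr (summable_norm_sub hw (hz w.1))

theorem l1Dist_wedgeToL1 {z : ∀ s, A s → E} (hz : ∀ s, Summable fun a => ‖z s a‖)
    {v w : Σ s, A s → E} (hv : Summable fun a => ‖v.2 a‖) (hw : Summable fun a => ‖w.2 a‖) :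
    l1Dist (wedgeToL1 z v) (wedgeToL1 z w) = wedgeDist (fun _ => l1Dist) z v w := by
  obtain ⟨s, v⟩ := v
  obtain ⟨t, w⟩ := w
  obtain rfl | hst := eq_or_ne s t
  · simp only [wedgeToL1, wedgeDist_same, l1Dist_extend_zero sigma_mk_injective]
    simp only [l1Dist, Pi.sub_apply, sub_sub_sub_cancel_right]
  · have hdisj : Disjoint (Set.range (Sigma.mk (β := A) s)) (Set.range (Sigma.mk t)) :=
      Set.disjoint_range_iff.mpr fun _ _ h => hst (congrArg Sigma.fst h)
    rw [wedgeDist_of_ne _ _ hst]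
    simp only [wedgeToL1, l1Dist_extend_zero_of_disjoint sigma_mk_injective sigma_mk_injective
      hdisj (summable_norm_sub hv (hz s)) (summable_norm_sub hw (hz t))]
    simp only [l1Dist, Pi.sub_apply, norm_sub_rev (w _)]

end WedgeToL1

theorem stmt8_general {S E : Type} [SeminormedAddCommGroup E] {X A : S → Type}
    {d : ∀ s, X s → X s → ℝ} (hd : ∀ s x y, 0 ≤ d s x y) {f : ∀ s, X s → A s → E}
    (hsum : ∀ s x, Summable fun a => ‖f s x a‖)
    (hf : EquiCoarseEmbedD d (fun _ => l1Dist) f) (p : ∀ s, X s) :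
    ∃ g : (Σ s, X s) → (Σ s, A s) → E,
      (∀ w, Summable fun b => ‖g w b‖) ∧ CoarseEmbedD (wedgeDist d p) l1Dist g := by
  have hz (s : S) : Summable fun a => ‖f s (p s) a‖ := hsum s (p s)
  refine ⟨fun w => wedgeToL1 (fun s => f s (p s)) (Sigma.map id f w),
    fun w => summable_norm_wedgeToL1 hz (hsum w.1 w.2), ?_⟩
  have hwedge := hf.wedge hd (fun _ => l1Dist_nonneg) p
  exact hwedge.of_dist_eq (e := id) (fun _ _ => rfl) fun v w =>
    l1Dist_wedgeToL1 hz (hsum v.1 v.2) (hsum w.1 w.2)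

/-- If a pseudo-metric space `X` coarsely embeds in `ℓ¹(A)` for some set `A`,
then for every set `S` and every choice of basepoints `x_s ∈ X` the wedge of the pointed
copies `(X_s, x_s)` of `X` coarsely embeds in `ℓ¹(B)` for some set `B`. -/
theorem stmt8 {X : Type} [PseudoMetricSpace X]
    (A : Type) (f : X → A → ℝ) (hsum : ∀ x, Summable fun a => |f x a|)
    (hf : CoarseEmbedD (fun x y : X => dist x y) (fun u v => ∑' a, |u a - v a|) f)
    (S : Type) (p : S → X) :
    ∃ (B : Type) (g : S × X → B → ℝ),
      (∀ w, Summable fun b => |g w b|) ∧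
      CoarseEmbedD (wedgeCopiesDist p) (fun u v => ∑' b, |u b - v b|) g := by
  obtain ⟨g, hg, hgc⟩ := stmt8_general (E := ℝ) (fun _ _ _ => dist_nonneg)
    (fun _ : S => hsum) (hf.equiCoarseEmbedD S) p
  exact ⟨_, fun w => g ⟨w.1, w.2⟩, fun w => hg ⟨w.1, w.2⟩,
    hgc.of_dist_eq (wedgeCopiesDist_eq_wedgeDist p) fun _ _ => rfl⟩
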